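/- Let T : (EuclideanSpace ℝ (Fin n)) × (EuclideanSpace ℝ (Fin n)) → ℝ be C¹ (arguments (q, v)), let L_j : EuclideanSpace ℝ (Fin n) → ℝ be C¹ and Λ_j ∈ ℝ with Λ_j ≠ 0, for j = 1, …, k. Let I be an open interval and q : I → EuclideanSpace ℝ (Fin n), X : I → ℝ^k be C¹ curves such that L_j(q t) > 0 and X_j'(t) > 0 for all t ∈ I. Suppose (q, X) satisfies the Euler–Lagrange equations of the lifted Lagrangian L̂(q, q̇, Ẋ) := T(q, q̇) + Σ_j Ẋ_j · (L_j(q)/Ẋ_j)^{1/Λ_j}: namely (EL-X) for each j the function t ↦ (1 − 1/Λ_j) · (L_j(q t)/X_j'(t))^{1/Λ_j} has derivative 0 on I, and (EL-q) the momentum curve t ↦ ∇_v T(q t, q'(t)) has at each t ∈ I derivative equal to ∇_q T(q t, q'(t)) + Σ_j (1/Λ_j) · (L_j(q t)/X_j'(t))^{(1/Λ_j) − 1} • ∇L_j(q t). Then there exist constants a₁, …, a_k ∈ ℝ, given by a_j = (1/Λ_j) · (X_j'(t)/L_j(q t))^{1 − 1/Λ_j} independently of t ∈ I, such that q satisfies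 the Euler–Lagrange equations of L_a = T + Σ_j a_j L_j: for each t ∈ I the derivative of t ↦ ∇_v T(q t, q'(t)) equals ∇_q T(q t, q'(t)) + Σ_j a_j • ∇L_j(q t). -/

import Mathlib

/-!
The momentum conjugate to `X_j` is `(1 - 1/Λ_j) (L_j/Ẋ_j)^{1/Λ_j}`, and it is constant on the
interval. If `Λ_j ≠ 1`, dividing by the prefactor and using that `x ↦ x^{1/Λ_j}` is injective on
positive reals shows that the ratio `L_j/Ẋ_j` is constant, hence so is
`a_j = (1/Λ_j) (Ẋ_j/L_j)^{1 - 1/Λ_j}`. If `Λ_j = 1`, the conservation law is void, but the exponent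
in `a_j` is zero, so `a_j = 1` anyway. Since
`(Ẋ_j/L_j)^{1 - 1/Λ_j} = (L_j/Ẋ_j)^{1/Λ_j - 1}`, the `q`-equation of the lifted Lagrangian is then
the Euler–Lagrange equation of `T + Σ_j a_j L_j`.
-/

noncomputable section

abbrev En (n : ℕ) := EuclideanSpace ℝ (Fin n)

/-- The coefficient `a_j` takes the same value at any two times; here `f` and `g` stand for
`L_j ∘ q` and `Ẋ_j`, and `l` for `Λ_j`. -/
lemma coeff_eq_of_conserved {α β l : ℝ} (hl : l ≠ 0) {f g : ℝ → ℝ}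
    (hf : ∀ t ∈ Set.Ioo α β, 0 < f t) (hg : ∀ t ∈ Set.Ioo α β, 0 < g t)
    (h : ∀ t ∈ Set.Ioo α β, HasDerivAt (fun s => (1 - 1 / l) * (f s / g s) ^ (1 / l)) 0 t)
    {s t : ℝ} (hs : s ∈ Set.Ioo α β) (ht : t ∈ Set.Ioo α β) :
    (1 / l) * (g s / f s) ^ (1 - 1 / l) = (1 / l) * (g t / f t) ^ (1 - 1 / l) := by
  by_cases h1 : 1 - 1 / l = 0
  · simp only [h1, Real.rpow_zero]
  · have hconst := isOpen_Ioo.is_const_of_deriv_eq_zero isPreconnected_Ioo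
      (fun x hx => (h x hx).differentiableAt.differentiableWithinAt)
      (fun x hx => (h x hx).deriv) hs ht
    have hpow := mul_left_cancel₀ h1 hconst
    have hratio : f s / g s = f t / g t :=
      Real.rpow_left_injOn (one_div_ne_zero hl) (div_pos (hf s hs) (hg s hs)).le
        (div_pos (hf t ht) (hg t ht)).le hpow
    rw [← inv_div (f s), ← inv_div (f t), hratio]

/-- Theorem 4 (Lagrangian counterpart of the lifted reduction): if `(q, X)` is an extremal of the
lifted Lagrangian `L̂ = T + Σ_j Ẋ_j (L_j/Ẋ_j)^{1/Λ_j}` on an open interval `I = (α, β)`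
(with `L_j(q t) > 0` and `X_j' > 0`), then `q` is an extremal of `L_a = T + Σ_j a_j L_j` for the
constants `a_j = (1/Λ_j)(X_j'/L_j(q))^{1 − 1/Λ_j}`, which are independent of `t ∈ I`.
All powers are `Real.rpow`. -/
theorem stmt7 {n k : ℕ} (T : En n × En n → ℝ) (hT : ContDiff ℝ 1 T)
    (L : Fin k → En n → ℝ) (hL : ∀ j, ContDiff ℝ 1 (L j))
    (Λ : Fin k → ℝ) (hΛ : ∀ j, Λ j ≠ 0)
    (α β : ℝ)
    (q : ℝ → En n) (q' : ℝ → En n) (X : ℝ → Fin k → ℝ) (X' : ℝ → Fin k → ℝ)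
    (hq : ∀ t ∈ Set.Ioo α β, HasDerivAt q (q' t) t)
    (hq' : ContinuousOn q' (Set.Ioo α β))
    (hX : ∀ t ∈ Set.Ioo α β, ∀ j, HasDerivAt (fun s => X s j) (X' t j) t)
    (hX' : ∀ j, ContinuousOn (fun t => X' t j) (Set.Ioo α β))
    (hLpos : ∀ t ∈ Set.Ioo α β, ∀ j, 0 < L j (q t))
    (hXpos : ∀ t ∈ Set.Ioo α β, ∀ j, 0 < X' t j)
    -- (EL-X): the momentum conjugate to each `X_j` is conserved
    (hELX : ∀ t ∈ Set.Ioo α β, ∀ j,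
      HasDerivAt (fun s => (1 - 1 / Λ j) * (L j (q s) / X' s j) ^ (1 / Λ j)) 0 t)
    -- (EL-q): the Euler–Lagrange equation of `L̂` in the `q` variable
    (hELq : ∀ t ∈ Set.Ioo α β,
      HasDerivAt (fun s => gradient (fun v => T (q s, v)) (q' s))
        (gradient (fun y => T (y, q' t)) (q t)
          + ∑ j, ((1 / Λ j) * (L j (q t) / X' t j) ^ (1 / Λ j - 1)) • gradient (L j) (q t)) t) :
    ∃ a : Fin k → ℝ,
      (∀ j, ∀ t ∈ Set.Ioo α β, a j = (1 / Λ j) * (X' t j / L j (q t)) ^ (1 - 1 / Λ j)) ∧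
      (∀ t ∈ Set.Ioo α β,
        HasDerivAt (fun s => gradient (fun v => T (q s, v)) (q' s))
          (gradient (fun y => T (y, q' t)) (q t) + ∑ j, (a j) • gradient (L j) (q t)) t) := by
  by_cases hI : (Set.Ioo α β).Nonempty
  · obtain ⟨t₀, ht₀⟩ := hI
    refine ⟨fun j => (1 / Λ j) * (X' t₀ j / L j (q t₀)) ^ (1 - 1 / Λ j),
      fun j t ht => coeff_eq_of_conserved (hΛ j) (fun s hs => hLpos s hs j)
        (fun s hs => hXpos s hs j) (fun s hs => hELX s hs j) ht₀ ht, fun t ht => ?_⟩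
    convert hELq t ht using 3 with j
    beta_reduce
    rw [coeff_eq_of_conserved (f := fun s => L j (q s)) (g := fun s => X' s j) (hΛ j) (fun s hs => hLpos s hs j)
      (fun s hs => hXpos s hs j) (fun s hs => hELX s hs j) ht₀ ht,
      ← inv_div (L j (q t)), Real.inv_rpow (div_pos (hLpos t ht j) (hXpos t ht j)).le,
      ← Real.rpow_neg (div_pos (hLpos t ht j) (hXpos t ht j)).le, neg_sub]
  · rw [Set.not_nonempty_iff_eq_empty] at hI
    simp [hI]
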